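/- arXiv:2402.11876 — 3 statements merged into one kernel-verified Lean document; each statement's English description precedes it below -/
import Mathlib

section
/- Let ρ_m < ρ₁ be real numbers, let K ≥ 0, M ≥ 0, L_f ≥ 0, Y ≥ 0 be constants, let R : [0, ∞) → [0, ∞) be continuous, and let u : [0, ∞) → [0, ∞) be continuous. Assume that for all t ≥ 0, u(t) ≤ K e^{ρ_m t} Y + M ∫₀ᵗ (R(s) + L_f) e^{ρ₁ (t−s)} u(s) ds. Then for all t ≥ 0, u(t) ≤ [ K e^{ρ_m t} + (K M / √(2(ρ₁ − ρ_m))) · e^{(M L_f + ρ₁) t + M ∫₀ᵗ R(s) ds + ∫₀ᵗ R(s)² ds} + (K M L_f / (ρ₁ − ρ_m)) · e^{(M L_f + ρ₁) t + M ∫₀ᵗ R(s) ds} ] · Y. -/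
/-!
Multiplying by `e^{-ρ₁ t}` turns the hypothesis into a linear integral inequality for
`e^{-ρ₁ t} u(t)` with decaying source `K Y e^{-(ρ₁ - ρm) t}` and kernel `M (R + Lf)`. Grönwall's
inequality then reduces the claim to bounding `∫₀ᵗ (R(s) + Lf) e^{-(ρ₁ - ρm) s} ds`. The constant
part contributes at most `Lf / (ρ₁ - ρm)`. For the part with `R`, the AM-GM inequality weighted by
`√(2 (ρ₁ - ρm))` gives at most `(∫₀ᵗ R² + 1) / (2 √(2 (ρ₁ - ρm)))`, and `x + 1 ≤ eˣ` finishes.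
-/

open Set intervalIntegral Real

section Primitive

variable {E : Type*} [NormedAddCommGroup E] [NormedSpace ℝ E] {f : ℝ → E} {a b : ℝ}

theorem continuousOn_integral_of_continuousOn_Icc (hf : ContinuousOn f (Icc a b)) :
    ContinuousOn (fun t ↦ ∫ s in a..t, f s) (Icc a b) := by
  obtain hab | hba := le_or_gt a b
  · rw [← uIcc_of_le hab] at hf ⊢
    exact continuousOn_primitive_interval' hf.intervalIntegrable left_mem_uIcc
  · simp only [Icc_eq_empty_of_lt hba, continuousOn_empty]

theorem hasDerivAt_integral_of_continuousOn_Icc [CompleteSpace E] (hf : ContinuousOn f (Icc a b))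
    {t : ℝ} (ht : t ∈ Ioo a b) : HasDerivAt (fun t ↦ ∫ s in a..t, f s) (f t) t :=
  integral_hasDerivAt_right
    ((hf.mono (Icc_subset_Icc_right ht.2.le)).intervalIntegrable_of_Icc ht.1.le)
    ((hf.mono Ioo_subset_Icc_self).stronglyMeasurableAtFilter isOpen_Ioo t ht)
    (hf.continuousAt (Icc_mem_nhds ht.1 ht.2))

end Primitive

section Gronwall

variable {u α β : ℝ → ℝ} {a b : ℝ}

-- Integrate the derivative `e^{-∫β} β (u - ∫βu) ≤ e^{-∫β} β α` of `e^{-∫β} ∫βu`.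
theorem exp_neg_integral_mul_integral_le (hab : a ≤ b) (hu : ContinuousOn u (Icc a b))
    (hα : ContinuousOn α (Icc a b)) (hβ : ContinuousOn β (Icc a b))
    (hβ_nonneg : ∀ t ∈ Icc a b, 0 ≤ β t)
    (h : ∀ t ∈ Icc a b, u t ≤ α t + ∫ s in a..t, β s * u s) :
    exp (-∫ s in a..b, β s) * ∫ s in a..b, β s * u s ≤
      ∫ s in a..b, exp (-∫ r in a..s, β r) * (β s * α s) := by
  have hB := continuousOn_integral_of_continuousOn_Icc hβ
  have hV := continuousOn_integral_of_continuousOn_Icc (hβ.mul hu)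
  have hderiv_le : ∀ t ∈ Ioo a b,
      exp (-∫ s in a..t, β s) * -β t * (∫ s in a..t, β s * u s) +
        exp (-∫ s in a..t, β s) * (β t * u t) ≤ exp (-∫ s in a..t, β s) * (β t * α t) := by
    intro t ht
    have ht' := Ioo_subset_Icc_self ht
    have hweight := mul_nonneg (exp_pos (-∫ s in a..t, β s)).le (hβ_nonneg t ht')
    linarith [mul_le_mul_of_nonneg_left (h t ht') hweight]
  have hincrement := sub_le_integral_of_hasDeriv_right_of_le hab (hB.neg.rexp.mul hV)
    (fun t ht ↦ ((hasDerivAt_integral_of_continuousOn_Icc hβ ht).neg.exp.mul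
      (hasDerivAt_integral_of_continuousOn_Icc (hβ.mul hu) ht)).hasDerivWithinAt)
    (hB.neg.rexp.mul (hβ.mul hα)).integrableOn_Icc hderiv_le
  simpa using hincrement

theorem le_add_exp_integral_mul_integral_of_le_add_integral (hab : a ≤ b)
    (hu : ContinuousOn u (Icc a b)) (hα : ContinuousOn α (Icc a b)) (hβ : ContinuousOn β (Icc a b))
    (hα_nonneg : ∀ t ∈ Icc a b, 0 ≤ α t) (hβ_nonneg : ∀ t ∈ Icc a b, 0 ≤ β t)
    (h : ∀ t ∈ Icc a b, u t ≤ α t + ∫ s in a..t, β s * u s) :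
    u b ≤ α b + exp (∫ s in a..b, β s) * ∫ s in a..b, β s * α s := by
  have hweight : ∫ s in a..b, exp (-∫ r in a..s, β r) * (β s * α s) ≤ ∫ s in a..b, β s * α s := by
    have hB := continuousOn_integral_of_continuousOn_Icc hβ
    refine integral_mono_on hab ((hB.neg.rexp.mul (hβ.mul hα)).intervalIntegrable_of_Icc hab)
      ((hβ.mul hα).intervalIntegrable_of_Icc hab) fun s hs ↦ ?_
    refine mul_le_of_le_one_left (mul_nonneg (hβ_nonneg s hs) (hα_nonneg s hs)) ?_
    exact exp_le_one_iff.2 (neg_nonpos.2 (integral_nonneg hs.1 fun r hr ↦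
      hβ_nonneg r (Icc_subset_Icc_right hs.2 hr)))
  calc u b ≤ α b + ∫ s in a..b, β s * u s := h b (right_mem_Icc.2 hab)
    _ = α b + exp (∫ s in a..b, β s) *
          (exp (-∫ s in a..b, β s) * ∫ s in a..b, β s * u s) := by
      rw [← mul_assoc, ← exp_add, add_neg_cancel, exp_zero, one_mul]
    _ ≤ α b + exp (∫ s in a..b, β s) * ∫ s in a..b, β s * α s := by
      gcongr
      exact (exp_neg_integral_mul_integral_le hab hu hα hβ hβ_nonneg h).trans hweight

theorem integral_mul_exp_mul_sub_mul (u β : ℝ → ℝ) (ρ a t : ℝ) :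
    ∫ s in a..t, β s * exp (ρ * (t - s)) * u s =
      exp (ρ * t) * ∫ s in a..t, β s * (exp (-(ρ * s)) * u s) := by
  rw [← integral_const_mul]
  congr with s
  rw [mul_sub, sub_eq_add_neg, exp_add]
  ring

theorem le_add_exp_mul_integral_of_le_add_integral_mul_exp (ρ : ℝ) (hab : a ≤ b)
    (hu : ContinuousOn u (Icc a b)) (hα : ContinuousOn α (Icc a b)) (hβ : ContinuousOn β (Icc a b))
    (hα_nonneg : ∀ t ∈ Icc a b, 0 ≤ α t) (hβ_nonneg : ∀ t ∈ Icc a b, 0 ≤ β t)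
    (h : ∀ t ∈ Icc a b, u t ≤ α t + ∫ s in a..t, β s * exp (ρ * (t - s)) * u s) :
    u b ≤ α b + exp (ρ * b + ∫ s in a..b, β s) * ∫ s in a..b, β s * (exp (-(ρ * s)) * α s) := by
  have hdamp : Continuous fun t ↦ exp (-(ρ * t)) := by fun_prop
  have hcancel (t : ℝ) : exp (ρ * t) * exp (-(ρ * t)) = 1 := by
    rw [← exp_add, add_neg_cancel, exp_zero]
  have hdamped : ∀ t ∈ Icc a b, exp (-(ρ * t)) * u t ≤
      exp (-(ρ * t)) * α t + ∫ s in a..t, β s * (exp (-(ρ * s)) * u s) := fun t ht ↦ by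
    calc exp (-(ρ * t)) * u t
        ≤ exp (-(ρ * t)) * (α t + ∫ s in a..t, β s * exp (ρ * (t - s)) * u s) := by
          gcongr; exact h t ht
      _ = exp (-(ρ * t)) * α t + ∫ s in a..t, β s * (exp (-(ρ * s)) * u s) := by
          rw [integral_mul_exp_mul_sub_mul]
          linear_combination (∫ s in a..t, β s * (exp (-(ρ * s)) * u s)) * hcancel t
  have hgronwall := le_add_exp_integral_mul_integral_of_le_add_integral hab
    (hdamp.continuousOn.fun_mul hu) (hdamp.continuousOn.fun_mul hα) hβ
    (fun t ht ↦ mul_nonneg (exp_pos _).le (hα_nonneg t ht)) hβ_nonneg hdamped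
  calc u b = exp (ρ * b) * (exp (-(ρ * b)) * u b) := by rw [← mul_assoc, hcancel, one_mul]
    _ ≤ exp (ρ * b) * (exp (-(ρ * b)) * α b +
          exp (∫ s in a..b, β s) * ∫ s in a..b, β s * (exp (-(ρ * s)) * α s)) := by gcongr
    _ = α b + exp (ρ * b + ∫ s in a..b, β s) * ∫ s in a..b, β s * (exp (-(ρ * s)) * α s) := by
      rw [mul_add, ← mul_assoc, ← mul_assoc, hcancel, one_mul, exp_add]

end Gronwall

theorem integral_exp_neg_mul_le {c : ℝ} (hc : 0 < c) (t : ℝ) :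
    ∫ s in 0..t, exp (-(c * s)) ≤ 1 / c := by
  have heval : ∫ s in 0..t, exp (-(c * s)) = (1 - exp (-(c * t))) / c := by
    simp only [← neg_mul]
    rw [integral_comp_mul_left _ (neg_ne_zero.2 hc.ne'), integral_exp, smul_eq_mul, mul_zero,
      exp_zero]
    field_simp
    ring
  rw [heval]
  gcongr
  exact sub_le_self _ (exp_pos _).le

theorem integral_mul_le_integral_sq_add_div {f g : ℝ → ℝ} {a b q : ℝ} (hab : a ≤ b)
    (hf : ContinuousOn f (Icc a b)) (hg : ContinuousOn g (Icc a b)) (hq : 0 < q) :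
    ∫ s in a..b, f s * g s ≤
      ((∫ s in a..b, f s ^ 2) + q ^ 2 * ∫ s in a..b, g s ^ 2) / (2 * q) := by
  have hf_sq : IntervalIntegrable (fun s ↦ f s ^ 2) MeasureTheory.volume a b :=
    (hf.pow 2).intervalIntegrable_of_Icc hab
  have hg_sq : IntervalIntegrable (fun s ↦ q ^ 2 * g s ^ 2) MeasureTheory.volume a b :=
    ((hg.pow 2).intervalIntegrable_of_Icc hab).const_mul (q ^ 2)
  rw [← integral_const_mul, ← integral_add hf_sq hg_sq,
    ← integral_div]
  refine integral_mono_on hab ((hf.mul hg).intervalIntegrable_of_Icc hab)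
    ((hf_sq.add hg_sq).div_const _) fun s _ ↦ ?_
  rw [le_div_iff₀ (by positivity)]
  linarith [two_mul_le_add_sq (f s) (q * g s), mul_pow q (g s) 2]

theorem integral_mul_exp_neg_mul_le {f : ℝ → ℝ} {c t : ℝ} (hc : 0 < c) (ht : 0 ≤ t)
    (hf : ContinuousOn f (Icc 0 t)) :
    ∫ s in 0..t, f s * exp (-(c * s)) ≤ exp (∫ s in 0..t, f s ^ 2) / √(2 * c) := by
  have hq : 0 < √(2 * c) := by positivity
  have hexp_sq : √(2 * c) ^ 2 * ∫ s in 0..t, exp (-(c * s)) ^ 2 ≤ 1 := by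
    have hsq (s : ℝ) : exp (-(c * s)) ^ 2 = exp (-(2 * c * s)) := by
      rw [← exp_nat_mul]; congr 1; push_cast; ring
    simp only [hsq]
    rw [sq_sqrt (by positivity), ← le_div_iff₀' (by positivity)]
    exact integral_exp_neg_mul_le (by positivity) t
  have hf_sq : 0 ≤ ∫ s in 0..t, f s ^ 2 := integral_nonneg ht fun s _ ↦ sq_nonneg (f s)
  calc ∫ s in 0..t, f s * exp (-(c * s))
      ≤ ((∫ s in 0..t, f s ^ 2) + √(2 * c) ^ 2 * ∫ s in 0..t, exp (-(c * s)) ^ 2) /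
          (2 * √(2 * c)) :=
        integral_mul_le_integral_sq_add_div ht hf (by fun_prop) hq
    _ ≤ 2 * exp (∫ s in 0..t, f s ^ 2) / (2 * √(2 * c)) := by
        gcongr
        linarith [add_one_le_exp (∫ s in 0..t, f s ^ 2)]
    _ = exp (∫ s in 0..t, f s ^ 2) / √(2 * c) := mul_div_mul_left _ _ two_ne_zero

theorem integral_add_const_mul_exp_neg_mul_le {f : ℝ → ℝ} {c L t : ℝ} (hc : 0 < c) (hL : 0 ≤ L)
    (ht : 0 ≤ t) (hf : ContinuousOn f (Icc 0 t)) :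
    ∫ s in 0..t, (f s + L) * exp (-(c * s)) ≤ exp (∫ s in 0..t, f s ^ 2) / √(2 * c) + L / c := by
  have hdecay : Continuous fun s ↦ exp (-(c * s)) := by fun_prop
  calc ∫ s in 0..t, (f s + L) * exp (-(c * s))
      = (∫ s in 0..t, f s * exp (-(c * s))) + L * ∫ s in 0..t, exp (-(c * s)) := by
        simp only [add_mul]
        rw [integral_add ((hf.fun_mul hdecay.continuousOn).intervalIntegrable_of_Icc ht)
          ((hdecay.intervalIntegrable 0 t).const_mul L), integral_const_mul]
    _ ≤ exp (∫ s in 0..t, f s ^ 2) / √(2 * c) + L * (1 / c) := by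
        gcongr
        · exact integral_mul_exp_neg_mul_le hc ht hf
        · exact integral_exp_neg_mul_le hc t
    _ = exp (∫ s in 0..t, f s ^ 2) / √(2 * c) + L / c := by rw [mul_one_div]

theorem stmt_4_general {ρm ρ₁ K M Lf Y t : ℝ} (hρ : ρm < ρ₁) (hK : 0 ≤ K) (hM : 0 ≤ M)
    (hLf : 0 ≤ Lf) (hY : 0 ≤ Y) (ht : 0 ≤ t) {R u : ℝ → ℝ}
    (hRc : ContinuousOn R (Icc 0 t)) (hR : ∀ s ∈ Icc 0 t, 0 ≤ R s + Lf)
    (huc : ContinuousOn u (Icc 0 t))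
    (h : ∀ r ∈ Icc 0 t, u r ≤ K * exp (ρm * r) * Y
      + M * ∫ s in 0..r, (R s + Lf) * exp (ρ₁ * (r - s)) * u s) :
    u t ≤ (K * exp (ρm * t)
      + K * M / √(2 * (ρ₁ - ρm)) *
          exp ((M * Lf + ρ₁) * t + M * (∫ s in 0..t, R s) + ∫ s in 0..t, R s ^ 2)
      + K * M * Lf / (ρ₁ - ρm) * exp ((M * Lf + ρ₁) * t + M * ∫ s in 0..t, R s)) * Y := by
  have hgronwall := le_add_exp_mul_integral_of_le_add_integral_mul_exp ρ₁ ht huc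
    (α := fun r ↦ K * exp (ρm * r) * Y) (β := fun s ↦ M * (R s + Lf)) (by fun_prop) (by fun_prop)
    (fun r _ ↦ by positivity) (fun s hs ↦ mul_nonneg hM (hR s hs)) fun r hr ↦ by
      simpa only [mul_assoc, integral_const_mul] using h r hr
  have hexponent : ρ₁ * t + ∫ s in 0..t, M * (R s + Lf) =
      (M * Lf + ρ₁) * t + M * ∫ s in 0..t, R s := by
    rw [integral_const_mul, integral_add (hRc.intervalIntegrable_of_Icc ht)
      intervalIntegrable_const, integral_const, smul_eq_mul]
    ring
  have hsource : ∫ s in 0..t, M * (R s + Lf) * (exp (-(ρ₁ * s)) * (K * exp (ρm * s) * Y)) =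
      K * M * Y * ∫ s in 0..t, (R s + Lf) * exp (-((ρ₁ - ρm) * s)) := by
    rw [← integral_const_mul]
    congr with s
    rw [show -((ρ₁ - ρm) * s) = -(ρ₁ * s) + ρm * s by ring, exp_add]
    ring
  rw [hexponent, hsource] at hgronwall
  calc u t ≤ _ := hgronwall
    _ ≤ K * exp (ρm * t) * Y + exp ((M * Lf + ρ₁) * t + M * ∫ s in 0..t, R s) * (K * M * Y *
          (exp (∫ s in 0..t, R s ^ 2) / √(2 * (ρ₁ - ρm)) + Lf / (ρ₁ - ρm))) := by
      gcongr
      exact integral_add_const_mul_exp_neg_mul_le (sub_pos.2 hρ) hLf ht hRc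
    _ = _ := by rw [exp_add _ (∫ s in 0..t, R s ^ 2)]; ring

/-- Gronwall-type estimate with two exponents: if
`u(t) ≤ K e^{ρ_m t} Y + M ∫₀ᵗ (R(s)+L_f) e^{ρ₁(t−s)} u(s) ds` for all `t ≥ 0`, then
`u(t) ≤ [K e^{ρ_m t} + (KM/√(2(ρ₁−ρ_m))) e^{(ML_f+ρ₁)t + M∫₀ᵗR + ∫₀ᵗR²}
        + (KML_f/(ρ₁−ρ_m)) e^{(ML_f+ρ₁)t + M∫₀ᵗR}]·Y`. -/
theorem stmt_4 (ρm ρ₁ : ℝ) (hρ : ρm < ρ₁) (K M Lf Y : ℝ)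
    (hK : 0 ≤ K) (hM : 0 ≤ M) (hLf : 0 ≤ Lf) (hY : 0 ≤ Y)
    (R u : ℝ → ℝ)
    (hRc : ContinuousOn R (Set.Ici 0)) (hRnn : ∀ t, 0 ≤ t → 0 ≤ R t)
    (huc : ContinuousOn u (Set.Ici 0)) (hunn : ∀ t, 0 ≤ t → 0 ≤ u t)
    (h : ∀ t, 0 ≤ t →
      u t ≤ K * Real.exp (ρm * t) * Y
        + M * ∫ s in (0:ℝ)..t, (R s + Lf) * Real.exp (ρ₁ * (t - s)) * u s) :
    ∀ t, 0 ≤ t →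
      u t ≤ (K * Real.exp (ρm * t)
        + (K * M / Real.sqrt (2 * (ρ₁ - ρm))) *
            Real.exp ((M * Lf + ρ₁) * t + M * (∫ s in (0:ℝ)..t, R s)
              + ∫ s in (0:ℝ)..t, (R s) ^ 2)
        + (K * M * Lf / (ρ₁ - ρm)) *
            Real.exp ((M * Lf + ρ₁) * t + M * ∫ s in (0:ℝ)..t, R s)) * Y := by
  intro t ht
  exact stmt_4_general hρ hK hM hLf hY ht (hRc.mono Icc_subset_Ici_self)
    (fun s hs ↦ add_nonneg (hRnn s hs.1) hLf) (huc.mono Icc_subset_Ici_self) fun r hr ↦ h r hr.1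
end

section
/- Let X be a real Banach space, let P : X → X be a continuous linear map with P ∘ P = P whose range is a finite-dimensional subspace of dimension m ≥ 1, let A ⊆ X, let f : X → X, and let L ≥ 0, δ ≥ 0, α > 0 be constants such that for all u, v ∈ A one has ‖P(f(u) − f(v))‖ ≤ L‖u − v‖ and ‖(f(u) − f(v)) − P(f(u) − f(v))‖ ≤ δ‖u − v‖. Suppose u₁, …, u_N ∈ A and r₁, …, r_N > 0 are such that A ⊆ ⋃_{i=1}^{N} B(u_i, 2r_i). Then there exist, for each i ∈ {1, …, N}, an integer n_i ≤ m·(2 + 4/α)^m and points u_i^1, …, u_i^{n_i} ∈ X such that f(A) ⊆ ⋃_{i=1}^{N} ⋃_{j=1}^{n_i} B(u_i^j, (αL + 2δ) r_i). -/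
/-!
Around each centre `u i`, the increment `f v - f (u i)` of a point `v ∈ B(u i, 2 r i)` is within
`2 δ r i` of its projection, which lies in the ball of radius `2 L r i` of the finite-dimensional
range of `P`. By comparing volumes, an `α L r i`-separated subset of that ball has at most
`(1 + 4 / α) ^ m` points, and a maximal one is an `α L r i`-net. Translating the net by `f (u i)`
gives the centres of the new balls.
-/

open Metric MeasureTheory Module Set
open scoped NNReal

section VolumetricBound

variable {E : Type*} [NormedAddCommGroup E] [NormedSpace ℝ E] [FiniteDimensional ℝ E]

theorem card_le_of_isSeparated_of_subset_closedBall {s : Finset E} {x : E} {R ε : ℝ≥0}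
    (hε : 0 < ε) (hsR : (s : Set E) ⊆ closedBall x R) (hs : IsSeparated ε (s : Set E)) :
    (s.card : ℝ≥0) ≤ (1 + 2 * R / ε) ^ finrank ℝ E := by
  borelize E
  let μ : Measure E := Measure.addHaar
  have hε₂ : (0 : ℝ) < ε / 2 := by positivity
  have hdisj : (s : Set E).PairwiseDisjoint fun c ↦ ball c (ε / 2 : ℝ) := fun c hc d hd hcd ↦ by
    have hlt : (ε : ENNReal) < edist c d := hs hc hd hcd
    rw [edist_nndist, ENNReal.coe_lt_coe, ← NNReal.coe_lt_coe, coe_nndist] at hlt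
    exact ball_disjoint_ball (by linarith)
  have hsub : (⋃ c ∈ s, ball c (ε / 2 : ℝ)) ⊆ ball x (R + ε / 2 : ℝ) :=
    iUnion₂_subset fun c hc ↦ ball_subset_ball' (by linarith [mem_closedBall.1 (hsR hc)])
  have hball (y : E) {t : ℝ} (ht : 0 < t) :
      μ.real (ball y t) = t ^ finrank ℝ E * μ.real (ball 0 1) := by
    rw [measureReal_def, μ.addHaar_ball_of_pos y ht, ENNReal.toReal_mul,
      ENNReal.toReal_ofReal (by positivity), ← measureReal_def]
  have hvol : s.card * (ε / 2 : ℝ) ^ finrank ℝ E * μ.real (ball 0 1) ≤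
      (R + ε / 2 : ℝ) ^ finrank ℝ E * μ.real (ball 0 1) := calc
    _ = μ.real (⋃ c ∈ s, ball c (ε / 2 : ℝ)) := by
      rw [measureReal_biUnion_finset hdisj fun _ _ ↦ measurableSet_ball]
      simp only [hball _ hε₂, Finset.sum_const, nsmul_eq_mul, mul_assoc]
    _ ≤ μ.real (ball x (R + ε / 2 : ℝ)) := measureReal_mono hsub
    _ = _ := hball x (by positivity)
  have hunit : 0 < μ.real (ball (0 : E) 1) :=
    ENNReal.toReal_pos (measure_ball_pos μ _ one_pos).ne' measure_ball_lt_top.ne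
  have hscale : (R + ε / 2 : ℝ) = (1 + 2 * R / ε) * (ε / 2) := by field_simp; ring
  have hcancel := le_of_mul_le_mul_right hvol hunit
  rw [hscale, mul_pow] at hcancel
  exact_mod_cast le_of_mul_le_mul_right hcancel (by positivity)

theorem packingNumber_closedBall_le (x : E) (R : ℝ≥0) {ε : ℝ≥0} (hε : 0 < ε) :
    packingNumber ε (closedBall x R) ≤ ⌊(1 + 2 * R / ε) ^ finrank ℝ E⌋₊ := by
  refine iSup₂_le fun C hCR ↦ iSup_le fun hC ↦ ?_
  by_contra! hlt
  obtain ⟨s, hsC, hs⟩ := exists_subset_encard_eq (Order.add_one_le_of_lt hlt)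
  lift s to Finset E using finite_of_encard_eq_coe hs
  have hcard := Nat.le_floor <|
    card_le_of_isSeparated_of_subset_closedBall hε (hsC.trans hCR) (hC.subset hsC)
  rw [encard_coe_eq_coe_finsetCard] at hs
  norm_cast at hs
  omega

/-- The radii share the factor `ρ` so that the degenerate case `ρ = 0` is included. -/
theorem coveringNumber_mul_closedBall_le (x : E) (K ρ : ℝ≥0) {α : ℝ≥0} (hα : 0 < α) :
    coveringNumber (α * ρ) (closedBall x (K * ρ : ℝ≥0)) ≤
      ⌊(1 + 2 * K / α) ^ finrank ℝ E⌋₊ := by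
  rcases eq_zero_or_pos ρ with rfl | hρ
  · have hone : 1 ≤ (1 + 2 * K / α) ^ finrank ℝ E := one_le_pow₀ (by simp)
    simpa using hone
  · have hratio : 2 * (K * ρ) / (α * ρ) = 2 * K / α := by
      rw [← mul_assoc, mul_div_mul_right _ _ hρ.ne']
    rw [← hratio]
    exact (coveringNumber_le_packingNumber _ _).trans
      (packingNumber_closedBall_le x _ (mul_pos hα hρ))

end VolumetricBound

theorem exists_fin_cover_of_externalCoveringNumber_le {X : Type*} [PseudoMetricSpace X]
    {ε : ℝ≥0} {S : Set X} {N : ℕ} (h : externalCoveringNumber ε S ≤ N) :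
    ∃ n ≤ N, ∃ y : Fin n → X, S ⊆ ⋃ j, closedBall (y j) ε := by
  have hlt : externalCoveringNumber ε S < (N + 1 : ℕ) := h.trans_lt (by norm_cast; omega)
  obtain ⟨C, hC, hCN⟩ : ∃ C, IsCover ε S C ∧ C.encard < (N + 1 : ℕ) := by
    simpa only [externalCoveringNumber, iInf_lt_iff, exists_prop] using hlt
  lift C to Finset X using finite_of_encard_le_coe hCN.le
  rw [encard_coe_eq_coe_finsetCard] at hCN
  refine ⟨C.card, by norm_cast at hCN; omega, fun j ↦ C.equivFin.symm j, ?_⟩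
  rw [C.equivFin.symm.surjective.iUnion_comp fun c ↦ closedBall (c : X) ε]
  simpa only [iUnion_subtype, SetLike.mem_coe] using hC.subset_iUnion_closedBall

section Squeezing

variable {X : Type*} [NormedAddCommGroup X] [NormedSpace ℝ X]
  {V : Submodule ℝ X} [FiniteDimensional ℝ V]

theorem externalCoveringNumber_le_of_near_submodule {S : Set X} {a : X} {K α ρ σ : ℝ≥0}
    (hα : 0 < α) (hS : ∀ x ∈ S, ∃ p : V, ‖p‖ ≤ K * ρ ∧ ‖x - a - p‖ ≤ σ) :
    externalCoveringNumber (α * ρ + σ) S ≤ ⌊(1 + 2 * K / α) ^ finrank ℝ V⌋₊ := by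
  have hcard := coveringNumber_mul_closedBall_le (0 : V) K ρ hα
  obtain ⟨C, -, -, hC, hCcard⟩ :=
    exists_set_encard_eq_coveringNumber (hcard.trans_lt (ENat.natCast_lt_top _)).ne
  have hcover : IsCover (α * ρ + σ) S ((fun c : V ↦ a + c) '' C) := by
    rw [isCover_iff_subset_iUnion_closedBall]
    intro x hx
    obtain ⟨p, hp, hxp⟩ := hS x hx
    obtain ⟨c, hc, hpc⟩ := mem_iUnion₂.1 (hC.subset_iUnion_closedBall (by simpa using hp))
    refine mem_iUnion₂.2 ⟨a + c, mem_image_of_mem _ hc, ?_⟩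
    rw [mem_closedBall, dist_eq_norm] at hpc ⊢
    calc ‖x - (a + c)‖ = ‖((p - c : V) : X) + (x - a - p)‖ := by congr 1; push_cast; abel
      _ ≤ ‖p - c‖ + ‖x - a - p‖ := norm_add_le _ _
      _ ≤ (α * ρ + σ : ℝ≥0) := by push_cast at hpc ⊢; exact add_le_add hpc hxp
  calc externalCoveringNumber (α * ρ + σ) S ≤ ((fun c : V ↦ a + c) '' C).encard :=
        hcover.externalCoveringNumber_le_encard
    _ ≤ C.encard := encard_image_le _ _
    _ ≤ _ := hCcard.trans_le hcard

variable {Y : Type*} [PseudoMetricSpace Y]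

theorem externalCoveringNumber_image_le_of_squeezing (P : X → V) {S : Set Y} {f : Y → X} {v : Y}
    {L δ α r : ℝ≥0} (hα : 0 < α) (hSv : S ⊆ closedBall v (2 * r))
    (hPf : ∀ w ∈ S, ‖P (f w - f v)‖ ≤ L * dist w v)
    (hQf : ∀ w ∈ S, ‖(f w - f v) - P (f w - f v)‖ ≤ δ * dist w v) :
    externalCoveringNumber ((α * L + 2 * δ) * r) (f '' S) ≤
      ⌊(1 + 4 / α) ^ finrank ℝ V⌋₊ := by
  have hnear : ∀ x ∈ f '' S, ∃ p : V,
      ‖p‖ ≤ (2 : ℝ≥0) * (L * r : ℝ≥0) ∧ ‖x - f v - p‖ ≤ (2 * δ * r : ℝ≥0) := by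
    rintro _ ⟨w, hw, rfl⟩
    have hdist : dist w v ≤ 2 * r := hSv hw
    refine ⟨P (f w - f v), (hPf w hw).trans ?_, (hQf w hw).trans ?_⟩
    · calc (L * dist w v : ℝ) ≤ L * (2 * r) := by gcongr
        _ = _ := by push_cast; ring
    · calc (δ * dist w v : ℝ) ≤ δ * (2 * r) := by gcongr
        _ = _ := by push_cast; ring
  convert externalCoveringNumber_le_of_near_submodule hα hnear using 1
  · congr 1; ring
  · norm_num

theorem stmt_7_general (P : X → V) (A : Set Y) (f : Y → X) (L δ α : ℝ)
    (hL : 0 ≤ L) (hδ : 0 ≤ δ) (hα : 0 < α)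
    (hPf : ∀ u ∈ A, ∀ v ∈ A, ‖P (f u - f v)‖ ≤ L * dist u v)
    (hQf : ∀ u ∈ A, ∀ v ∈ A, ‖(f u - f v) - P (f u - f v)‖ ≤ δ * dist u v)
    {ι : Type*} (u : ι → Y) (hu : ∀ i, u i ∈ A) (r : ι → ℝ) (hr : ∀ i, 0 ≤ r i)
    (hcov : A ⊆ ⋃ i, closedBall (u i) (2 * r i)) :
    ∃ (n : ι → ℕ) (y : (i : ι) → Fin (n i) → X),
      (∀ i, (n i : ℝ) ≤ (1 + 4 / α) ^ finrank ℝ V) ∧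
      f '' A ⊆ ⋃ i, ⋃ j, closedBall (y i j) ((α * L + 2 * δ) * r i) := by
  lift L to ℝ≥0 using hL
  lift δ to ℝ≥0 using hδ
  lift α to ℝ≥0 using hα.le
  lift r to ι → ℝ≥0 using hr
  have hpiece (i : ι) := exists_fin_cover_of_externalCoveringNumber_le <|
    externalCoveringNumber_image_le_of_squeezing P (S := A ∩ closedBall (u i) (2 * r i))
      (mod_cast hα) inter_subset_right
      (fun w hw ↦ hPf w hw.1 (u i) (hu i)) (fun w hw ↦ hQf w hw.1 (u i) (hu i))
  choose n hn y hy using hpiece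
  refine ⟨n, y, fun i ↦ mod_cast (Nat.le_floor_iff zero_le).1 (hn i), ?_⟩
  rintro _ ⟨v, hv, rfl⟩
  obtain ⟨i, hi⟩ := mem_iUnion.1 (hcov hv)
  exact mem_iUnion.2 ⟨i, mod_cast hy i (mem_image_of_mem f ⟨hv, hi⟩)⟩

end Squeezing

/-- Squeezing + covering step: if `P` is a finite-rank projection of rank `m ≥ 1`,
`f` satisfies `‖P(f u − f v)‖ ≤ L‖u−v‖` and `‖(I−P)(f u − f v)‖ ≤ δ‖u−v‖` on `A`, and
`A ⊆ ⋃ᵢ B(uᵢ, 2rᵢ)` with `uᵢ ∈ A`, `rᵢ > 0`, then `f(A)` can be covered by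
`⋃ᵢ⋃ⱼ B(uᵢʲ, (αL+2δ)rᵢ)` with at most `m(2+4/α)^m` balls for each `i`. -/
theorem stmt_7 {X : Type*} [NormedAddCommGroup X] [NormedSpace ℝ X] [CompleteSpace X]
    (P : X →L[ℝ] X) (hproj : ∀ z : X, P (P z) = P z) (m : ℕ)
    (hrank : Module.finrank ℝ (LinearMap.range (P : X →ₗ[ℝ] X)) = m) (hm : 1 ≤ m)
    (A : Set X) (f : X → X) (L δ α : ℝ) (hL : 0 ≤ L) (hδ : 0 ≤ δ) (hα : 0 < α)
    (hPf : ∀ u ∈ A, ∀ v ∈ A, ‖P (f u - f v)‖ ≤ L * ‖u - v‖)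
    (hQf : ∀ u ∈ A, ∀ v ∈ A, ‖(f u - f v) - P (f u - f v)‖ ≤ δ * ‖u - v‖)
    (N : ℕ) (u : Fin N → X) (hu : ∀ i, u i ∈ A)
    (r : Fin N → ℝ) (hr : ∀ i, 0 < r i)
    (hcov : A ⊆ ⋃ i, Metric.closedBall (u i) (2 * r i)) :
    ∃ (n : Fin N → ℕ) (y : (i : Fin N) → Fin (n i) → X),
      (∀ i, (n i : ℝ) ≤ (m : ℝ) * (2 + 4 / α) ^ m) ∧
      f '' A ⊆ ⋃ i, ⋃ j, Metric.closedBall (y i j) ((α * L + 2 * δ) * r i) := by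
  subst hrank
  have : FiniteDimensional ℝ P.toLinearMap.range := .of_finrank_pos hm
  obtain ⟨n, y, hn, hy⟩ := stmt_7_general P.toLinearMap.rangeRestrict A f L δ α hL hδ hα
    (by simp only [dist_eq_norm]; exact hPf) (by simp only [dist_eq_norm]; exact hQf)
    u hu r (fun i ↦ (hr i).le) hcov
  refine ⟨n, y, fun i ↦ (hn i).trans ?_, hy⟩
  calc (1 + 4 / α) ^ finrank ℝ P.toLinearMap.range
      ≤ (2 + 4 / α) ^ finrank ℝ P.toLinearMap.range := by gcongr; norm_num
    _ ≤ _ := le_mul_of_one_le_left (by positivity) (mod_cast hm)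
end

section
/- Let X be a real Banach space, let A ⊆ X be a nonempty compact set, let f : X → X satisfy f(A) = A, and let P : X → X be a continuous linear map with P ∘ P = P whose range is a finite-dimensional subspace of dimension m ≥ 1. Suppose there exist constants L ≥ 0, δ ≥ 0 such that for all u, v ∈ A, ‖P(f(u) − f(v))‖ ≤ L‖u − v‖ and ‖(f(u) − f(v)) − P(f(u) − f(v))‖ ≤ δ‖u − v‖. If α > 0 and d > 0 satisfy m·(2 + 4/α)^m · (αL + 2δ)^d < 1, then the d-dimensional Hausdorff measure of A is zero; in particular the Hausdorff dimension of A is at most d. -/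
open MeasureTheory

/-!
Let `S ⊆ A` have diameter `r`. The set `P (f S)` has diameter at most `L r` in a space of dimension
`m`, so a volume argument covers it by `(1 + 4 / α) ^ m` sets of diameter at most `α L r`. Their
preimages in `f S` have diameter at most `(α L + δ) r`, since the component `f u - P (f u)` adds at
most `δ r`. As `A ⊆ f A`, iterating covers `A` by `(1 + 4 / α) ^ (m k)` sets of diameter at most
`(α L + δ) ^ k diam A`, and the `d`-th powers of these diameters sum to at most
`((1 + 4 / α) ^ m (α L + δ) ^ d) ^ k (diam A) ^ d`, which tends to `0`.
-/

open Filter Metric Module Set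
open scoped ENNReal Function NNReal Topology

/-- `CoverableBy n r S`: the set `S` can be covered by at most `n` sets of diameter at most `r`.
The covering sets need not be contained in `S`. -/
def CoverableBy {X : Type*} [PseudoEMetricSpace X] (n : ℕ) (r : ℝ≥0∞) (S : Set X) : Prop :=
  ∃ T : Finset (Set X), T.card ≤ n ∧ S ⊆ ⋃ C ∈ T, C ∧ ∀ C ∈ T, ediam C ≤ r

namespace CoverableBy

variable {X Y : Type*} [PseudoEMetricSpace X] [PseudoEMetricSpace Y]
  {n p : ℕ} {r r' : ℝ≥0∞} {S S' : Set X}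

theorem mono (h : CoverableBy n r S) (hn : n ≤ p) (hr : r ≤ r') : CoverableBy p r' S := by
  obtain ⟨T, hcard, hcover, hdiam⟩ := h
  exact ⟨T, hcard.trans hn, hcover, fun C hC => (hdiam C hC).trans hr⟩

theorem subset (h : CoverableBy n r S) (hS : S' ⊆ S) : CoverableBy n r S' := by
  obtain ⟨T, hcard, hcover, hdiam⟩ := h
  exact ⟨T, hcard, hS.trans hcover, hdiam⟩

theorem eq_empty (h : CoverableBy 0 r S) : S = ∅ := by
  obtain ⟨T, hcard, hcover, -⟩ := h
  simpa [Finset.card_eq_zero.mp (Nat.le_zero.mp hcard)] using hcover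

theorem one_ediam (S : Set X) : CoverableBy 1 (ediam S) S :=
  ⟨{S}, by simp, by simp, by simp⟩

theorem of_isCover {N : Set X} {ε : ℝ≥0} (hN : N.encard ≤ n) (hcover : IsCover ε S N) :
    CoverableBy n (2 * ε) S := by
  classical
  have hfin : N.Finite := finite_of_encard_le_coe hN
  have hcard : hfin.toFinset.card ≤ n := by
    rwa [hfin.encard_eq_coe_toFinset_card, Nat.cast_le] at hN
  refine ⟨hfin.toFinset.image (closedEBall · ε), Finset.card_image_le.trans hcard, ?_, ?_⟩
  · simpa using isCover_iff_subset_iUnion_closedEBall.mp hcover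
  · simp only [Finset.forall_mem_image]
    exact fun x _ => ediam_closedEBall_le

theorem image_of_edist_le {Z : Type*} {f : Z → X} {g : Z → Y} {U : Set Z} {s : ℝ≥0∞}
    (h : CoverableBy n r (g '' U))
    (hfg : ∀ u ∈ U, ∀ v ∈ U, edist (f u) (f v) ≤ edist (g u) (g v) + s) :
    CoverableBy n (r + s) (f '' U) := by
  classical
  obtain ⟨T, hcard, hcover, hdiam⟩ := h
  refine ⟨T.image fun C => f '' (U ∩ g ⁻¹' C), Finset.card_image_le.trans hcard, ?_, ?_⟩
  · rintro _ ⟨u, hu, rfl⟩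
    obtain ⟨C, hC, huC⟩ := mem_iUnion₂.mp (hcover (mem_image_of_mem g hu))
    exact mem_iUnion₂.mpr ⟨_, Finset.mem_image_of_mem _ hC, u, ⟨hu, huC⟩, rfl⟩
  · simp only [Finset.forall_mem_image]
    refine fun C hC => ediam_le ?_
    rintro _ ⟨u, ⟨hu, huC⟩, rfl⟩ _ ⟨v, ⟨hv, hvC⟩, rfl⟩
    have hg : edist (g u) (g v) ≤ r :=
      (edist_le_ediam_of_mem (mem_preimage.mp huC) (mem_preimage.mp hvC)).trans (hdiam C hC)
    grw [hfg u hu v hv, hg]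

theorem image_of_forall_subset {f : X → Y} (h : CoverableBy n r S)
    (hf : ∀ C ⊆ S, ediam C ≤ r → CoverableBy p r' (f '' C)) :
    CoverableBy (n * p) r' (f '' S) := by
  classical
  obtain ⟨T, hcard, hcover, hdiam⟩ := h
  have hpiece (C : T) : CoverableBy p r' (f '' (S ∩ C)) :=
    hf _ inter_subset_left ((ediam_mono inter_subset_right).trans (hdiam C C.2))
  choose V hVcard hVcover hVdiam using hpiece
  refine ⟨T.attach.biUnion V, ?_, ?_, ?_⟩
  · calc (T.attach.biUnion V).card ≤ T.attach.card * p :=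
          Finset.card_biUnion_le_card_mul _ _ _ fun C _ => hVcard C
      _ ≤ n * p := by rw [Finset.card_attach]; gcongr
  · rintro _ ⟨u, hu, rfl⟩
    obtain ⟨C, hC, huC⟩ := mem_iUnion₂.mp (hcover hu)
    obtain ⟨D, hD, huD⟩ := mem_iUnion₂.mp (hVcover ⟨C, hC⟩ (mem_image_of_mem f ⟨hu, huC⟩))
    exact mem_iUnion₂.mpr ⟨D, Finset.mem_biUnion.mpr ⟨_, Finset.mem_attach _ _, hD⟩, huD⟩
  · intro D hD
    obtain ⟨C, -, hDC⟩ := Finset.mem_biUnion.mp hD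
    exact hVdiam C D hDC

theorem pow_of_subset_image {f : X → X} {A : Set X} {q : ℝ≥0∞} (hA : A ⊆ f '' A)
    (hf : ∀ S ⊆ A, CoverableBy n (q * ediam S) (f '' S)) (k : ℕ) :
    CoverableBy (n ^ k) (q ^ k * ediam A) A := by
  induction k with
  | zero => simpa using one_ediam A
  | succ k ih =>
    rw [pow_succ, pow_succ', mul_assoc]
    refine (ih.image_of_forall_subset fun C hCA hC => ?_).subset hA
    exact (hf C hCA).mono le_rfl (by gcongr)

end CoverableBy

section FiniteDimensional

variable {E : Type*} [NormedAddCommGroup E] [NormedSpace ℝ E] [FiniteDimensional ℝ E]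
  {R ε : ℝ≥0} {S : Set E}

/- The balls of radius `ε / 2` around the points of `t` are disjoint and contained in the ball of
radius `R + ε / 2 = (1 + 2 R / ε) (ε / 2)`; compare their Haar measures. -/
theorem card_le_pow_finrank_of_isSeparated {t : Finset E} {c : E} (hε : 0 < ε)
    (ht : (t : Set E) ⊆ closedBall c R) (hsep : IsSeparated ε (t : Set E)) :
    (t.card : ℝ≥0) ≤ (1 + 2 * R / ε) ^ finrank ℝ E := by
  borelize E
  let μ : Measure E := Measure.addHaar
  have hε' : (0 : ℝ) < ε := hε
  have hdisj : (t : Set E).Pairwise (Disjoint on fun x => ball x (ε / 2 : ℝ)) := by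
    refine fun x hx y hy hxy => ball_disjoint_ball ?_
    have hlt : (ε : ℝ) < dist x y := by
      simpa only [edist_nndist, ENNReal.coe_lt_coe, ← NNReal.coe_lt_coe, coe_nndist]
        using hsep hx hy hxy
    linarith
  have hsub : ⋃ x ∈ t, ball x (ε / 2 : ℝ) ⊆ ball c ((1 + 2 * R / ε) * (ε / 2)) := by
    refine iUnion₂_subset fun x hx => ball_subset_ball' ?_
    have hxc : dist x c ≤ R := ht hx
    have hradius : (1 + 2 * R / ε : ℝ) * (ε / 2) = ε / 2 + R := by field_simp
    linarith
  have hvol : (t.card : ℝ≥0∞) * μ (ball 0 (ε / 2 : ℝ)) ≤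
      ENNReal.ofReal ((1 + 2 * R / ε) ^ finrank ℝ E) * μ (ball 0 (ε / 2 : ℝ)) :=
    calc (t.card : ℝ≥0∞) * μ (ball 0 (ε / 2 : ℝ)) = μ (⋃ x ∈ t, ball x (ε / 2 : ℝ)) := by
          rw [measure_biUnion_finset hdisj fun _ _ => measurableSet_ball]
          simp [μ, Measure.addHaar_ball_center]
      _ ≤ μ (ball c ((1 + 2 * R / ε) * (ε / 2))) := measure_mono hsub
      _ = _ := μ.addHaar_ball_mul_of_pos c (by positivity) _
  have hcard : (t.card : ℝ≥0∞) ≤ ENNReal.ofReal ((1 + 2 * R / ε) ^ finrank ℝ E) :=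
    (ENNReal.mul_le_mul_iff_left (measure_ball_pos μ _ (half_pos hε')).ne'
      measure_ball_lt_top.ne).mp hvol
  rw [← ENNReal.ofReal_natCast, ENNReal.ofReal_le_ofReal_iff (by positivity)] at hcard
  exact_mod_cast hcard

theorem packingNumber_le_floor_pow_finrank (hε : 0 < ε) (hS : ediam S ≤ R) :
    packingNumber ε S ≤ ⌊(1 + 2 * R / ε) ^ finrank ℝ E⌋₊ := by
  refine iSup_le fun C => iSup_le fun hCS => iSup_le fun hsep => ?_
  by_contra! hlt
  obtain ⟨t, htC, htcard⟩ := exists_subset_encard_eq (Order.add_one_le_of_lt hlt)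
  lift t to Finset E using finite_of_encard_eq_coe htcard
  rw [encard_coe_eq_coe_finsetCard] at htcard
  norm_cast at htcard
  obtain ⟨c, hc⟩ : t.Nonempty := Finset.card_pos.mp (by omega)
  have hball : (t : Set E) ⊆ closedBall c R := by
    rw [← closedEBall_coe]
    exact fun x hx => (edist_le_ediam_of_mem (hCS (htC hx)) (hCS (htC hc))).trans hS
  have hfloor := Nat.le_floor (card_le_pow_finrank_of_isSeparated hε hball (hsep.subset htC))
  omega

theorem coverableBy_mul_ediam {α : ℝ≥0} (hα : 0 < α) (hS : ediam S ≠ ∞) :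
    CoverableBy ⌊(1 + 4 / α) ^ finrank ℝ E⌋₊ (α * ediam S) S := by
  obtain ⟨R, hR⟩ : ∃ R : ℝ≥0, ediam S = R := ⟨_, (ENNReal.coe_toNNReal hS).symm⟩
  rcases eq_zero_or_pos R with rfl | hRpos
  · have hone : 1 ≤ ⌊(1 + 4 / α) ^ finrank ℝ E⌋₊ :=
      (Nat.one_le_floor_iff _).mpr (one_le_pow₀ le_self_add)
    exact (CoverableBy.one_ediam S).mono hone (by simp [hR])
  have hpack := packingNumber_le_floor_pow_finrank (ε := α * R / 2) (by positivity) hR.le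
  have hratio : 2 * R / (α * R / 2) = 4 / α := by field_simp; norm_num
  rw [hratio] at hpack
  have hcov : coveringNumber (α * R / 2) S ≤ ⌊(1 + 4 / α) ^ finrank ℝ E⌋₊ :=
    (coveringNumber_le_packingNumber _ _).trans hpack
  have hfin := ne_top_of_le_ne_top (ENat.natCast_ne_top _) hcov
  have hcover : CoverableBy ⌊(1 + 4 / α) ^ finrank ℝ E⌋₊ (2 * (α * R / 2 : ℝ≥0)) S :=
    .of_isCover ((encard_minimalCover hfin).trans_le hcov) (isCover_minimalCover hfin)
  refine hcover.mono le_rfl ?_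
  rw [hR]
  exact_mod_cast (mul_div_cancel₀ (α * R) two_ne_zero).le

end FiniteDimensional

section Hausdorff

variable {X : Type*} [EMetricSpace X] [MeasurableSpace X] [BorelSpace X] {A : Set X} {d : ℝ}

theorem hausdorffMeasure_eq_zero_of_tendsto {ι : Type*} {l : Filter ι} [l.NeBot] {n : ι → ℕ}
    {r : ι → ℝ≥0∞} (hd : 0 ≤ d) (hcover : ∀ k, CoverableBy (n k) (r k) A)
    (hr : Tendsto r l (𝓝 0)) (hsum : Tendsto (fun k => n k * r k ^ d) l (𝓝 0)) :
    μH[d] A = 0 := by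
  choose T hcard hT hdiam using hcover
  have hle (k : ι) : ∑ C : T k, ediam (C : Set X) ^ d ≤ n k * r k ^ d :=
    calc ∑ C : T k, ediam (C : Set X) ^ d ≤ ∑ _ : T k, r k ^ d := by
          gcongr with C
          exact hdiam k C C.2
      _ = (T k).card * r k ^ d := by simp
      _ ≤ n k * r k ^ d := by gcongr; exact hcard k
  refine le_antisymm ?_ zero_le
  calc μH[d] A ≤ liminf (fun k => ∑ C : T k, ediam (C : Set X) ^ d) l :=
        Measure.hausdorffMeasure_le_liminf_sum d A r hr (fun k (C : T k) => (C : Set X))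
          (.of_forall fun k C => hdiam k C C.2)
          (.of_forall fun k => by simpa only [iUnion_subtype] using hT k)
    _ ≤ liminf (fun k => n k * r k ^ d) l := liminf_le_liminf (.of_forall hle)
    _ = 0 := hsum.liminf_eq

theorem hausdorffMeasure_eq_zero_of_forall_image_coverableBy {f : X → X} {N : ℕ} {q : ℝ≥0}
    (hd : 0 ≤ d) (hA : ediam A ≠ ∞) (hfA : A ⊆ f '' A)
    (hf : ∀ S ⊆ A, CoverableBy N (q * ediam S) (f '' S)) (hNq : N * q ^ d < 1) :
    μH[d] A = 0 := by
  rcases N.eq_zero_or_pos with rfl | hN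
  · have hempty : A = ∅ := image_eq_empty.mp (hf A subset_rfl).eq_empty
    simp [hempty]
  have hq : q < 1 := by
    by_contra! hq
    exact hNq.not_ge (one_le_mul (mod_cast hN) (NNReal.one_le_rpow hq hd))
  have hNq' : (N : ℝ≥0∞) * (q : ℝ≥0∞) ^ d < 1 := by
    rw [← ENNReal.coe_rpow_of_nonneg _ hd]
    exact_mod_cast hNq
  refine hausdorffMeasure_eq_zero_of_tendsto (l := atTop) hd
    (CoverableBy.pow_of_subset_image hfA hf) ?_ ?_
  · simpa using ENNReal.Tendsto.mul_const
      (ENNReal.tendsto_pow_atTop_nhds_zero_of_lt_one (mod_cast hq)) (.inr hA)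
  · have hterm (k : ℕ) : ((N ^ k : ℕ) : ℝ≥0∞) * ((q : ℝ≥0∞) ^ k * ediam A) ^ d =
        (N * (q : ℝ≥0∞) ^ d) ^ k * ediam A ^ d := by
      rw [ENNReal.mul_rpow_of_nonneg _ _ hd, ← ENNReal.rpow_natCast_mul, mul_comm (k : ℝ),
        ENNReal.rpow_mul_natCast, mul_pow, Nat.cast_pow, mul_assoc]
    simp only [hterm]
    simpa using ENNReal.Tendsto.mul_const
      (ENNReal.tendsto_pow_atTop_nhds_zero_of_lt_one hNq')
      (.inr (ENNReal.rpow_ne_top_of_nonneg hd hA))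

theorem hausdorffMeasure_eq_zero_of_squeezing {E : Type*} [NormedAddCommGroup E] [NormedSpace ℝ E]
    [FiniteDimensional ℝ E] {f : X → X} {g : X → E} {L δ α : ℝ≥0} (hd : 0 ≤ d) (hα : 0 < α)
    (hA : ediam A ≠ ∞) (hfA : A ⊆ f '' A) (hg : LipschitzOnWith L g A)
    (hfg : ∀ u ∈ A, ∀ v ∈ A, edist (f u) (f v) ≤ edist (g u) (g v) + δ * edist u v)
    (hcond : (1 + 4 / α) ^ finrank ℝ E * (α * L + δ) ^ d < 1) :
    μH[d] A = 0 := by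
  refine hausdorffMeasure_eq_zero_of_forall_image_coverableBy hd hA hfA
    (N := ⌊(1 + 4 / α) ^ finrank ℝ E⌋₊) (q := α * L + δ) (fun S hS => ?_) ?_
  · have hgS : ediam (g '' S) ≤ L * ediam S :=
      ediam_image_le_iff.mpr fun u hu v hv => by
        grw [hg (hS hu) (hS hv), edist_le_ediam_of_mem hu hv]
    have hgS_fin : ediam (g '' S) ≠ ∞ :=
      ne_top_of_le_ne_top (ENNReal.mul_ne_top ENNReal.coe_ne_top
        (ne_top_of_le_ne_top hA (ediam_mono hS))) hgS
    have hfgS : ∀ u ∈ S, ∀ v ∈ S, edist (f u) (f v) ≤ edist (g u) (g v) + δ * ediam S :=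
      fun u hu v hv => by
        grw [hfg u (hS hu) v (hS hv), edist_le_ediam_of_mem hu hv]
    refine ((coverableBy_mul_ediam hα hgS_fin).image_of_edist_le hfgS).mono le_rfl ?_
    grw [hgS]
    push_cast
    rw [add_mul, mul_assoc]
  · grw [Nat.floor_le zero_le]
    exact hcond

theorem dimH_le_ofReal_of_hausdorffMeasure_eq_zero (hd : 0 ≤ d) (hA : μH[d] A = 0) :
    dimH A ≤ ENNReal.ofReal d := by
  refine dimH_le_of_hausdorffMeasure_ne_top (d := d.toNNReal) ?_
  simp [Real.coe_toNNReal d hd, hA]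

end Hausdorff

theorem stmt_8_general {X : Type*} [NormedAddCommGroup X] [NormedSpace ℝ X]
    [MeasurableSpace X] [BorelSpace X] {A : Set X} (hA : Bornology.IsBounded A)
    {f : X → X} (hfA : A ⊆ f '' A)
    (P : X →ₗ[ℝ] X) [FiniteDimensional ℝ (LinearMap.range P)]
    {L δ : ℝ} (hL : 0 ≤ L) (hδ : 0 ≤ δ)
    (hPf : ∀ u ∈ A, ∀ v ∈ A, ‖P (f u - f v)‖ ≤ L * ‖u - v‖)
    (hQf : ∀ u ∈ A, ∀ v ∈ A, ‖(f u - f v) - P (f u - f v)‖ ≤ δ * ‖u - v‖)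
    {α d : ℝ} (hα : 0 < α) (hd : 0 ≤ d)
    (hcond : (1 + 4 / α) ^ finrank ℝ (LinearMap.range P) * (α * L + δ) ^ d < 1) :
    μH[d] A = 0 ∧ dimH A ≤ ENNReal.ofReal d := by
  lift L to ℝ≥0 using hL
  lift δ to ℝ≥0 using hδ
  lift α to ℝ≥0 using hα.le
  let g : X → LinearMap.range P := fun u => P.rangeRestrict (f u)
  have hg_dist (u v : X) : dist (g u) (g v) = ‖P (f u - f v)‖ := by
    rw [dist_eq_norm, ← map_sub]
    rfl
  have hg : LipschitzOnWith L g A := .of_dist_le_mul fun u hu v hv => by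
    simpa only [hg_dist, dist_eq_norm] using hPf u hu v hv
  have hfg (u) (hu : u ∈ A) (v) (hv : v ∈ A) :
      edist (f u) (f v) ≤ edist (g u) (g v) + δ * edist u v := by
    have hdist : dist (f u) (f v) ≤ dist (g u) (g v) + δ * dist u v := by
      rw [hg_dist, dist_eq_norm, dist_eq_norm]
      linarith [norm_le_norm_add_norm_sub' (f u - f v) (P (f u - f v)), hQf u hu v hv]
    simp only [edist_nndist]
    exact_mod_cast hdist
  have hzero := hausdorffMeasure_eq_zero_of_squeezing hd (mod_cast hα) hA.ediam_ne_top hfA hg hfg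
    (mod_cast hcond)
  exact ⟨hzero, dimH_le_ofReal_of_hausdorffMeasure_eq_zero hd hzero⟩

theorem pow_mul_rpow_le_mul_pow_mul_rpow {m : ℕ} (hm : 1 ≤ m) {L δ α d : ℝ} (hL : 0 ≤ L)
    (hδ : 0 ≤ δ) (hα : 0 < α) (hd : 0 ≤ d) :
    (1 + 4 / α) ^ m * (α * L + δ) ^ d ≤ m * (2 + 4 / α) ^ m * (α * L + 2 * δ) ^ d := by
  have hbase : (1 + 4 / α) ^ m ≤ m * (2 + 4 / α) ^ m :=
    calc (1 + 4 / α) ^ m ≤ (2 + 4 / α) ^ m := by gcongr; norm_num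
      _ ≤ m * (2 + 4 / α) ^ m := le_mul_of_one_le_left (by positivity) (mod_cast hm)
  have hδ2 : δ ≤ 2 * δ := by linarith
  gcongr

/-- If a compact invariant set `A = f(A)` admits a finite-rank projection `P` of rank
`m ≥ 1` with the squeezing estimates `‖P(f u − f v)‖ ≤ L‖u−v‖`,
`‖(I−P)(f u − f v)‖ ≤ δ‖u−v‖` on `A`, and `α > 0`, `d > 0` satisfy
`m(2+4/α)^m (αL+2δ)^d < 1`, then the `d`-dimensional Hausdorff measure of `A` is zero;
in particular `dim_H A ≤ d`. -/
theorem stmt_8 {X : Type*} [NormedAddCommGroup X] [NormedSpace ℝ X] [CompleteSpace X]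
    [MeasurableSpace X] [BorelSpace X]
    (A : Set X) (hA : A.Nonempty) (hAc : IsCompact A)
    (f : X → X) (hfA : f '' A = A)
    (P : X →L[ℝ] X) (hproj : ∀ z : X, P (P z) = P z) (m : ℕ)
    (hrank : Module.finrank ℝ (LinearMap.range (P : X →ₗ[ℝ] X)) = m) (hm : 1 ≤ m)
    (L δ : ℝ) (hL : 0 ≤ L) (hδ : 0 ≤ δ)
    (hPf : ∀ u ∈ A, ∀ v ∈ A, ‖P (f u - f v)‖ ≤ L * ‖u - v‖)
    (hQf : ∀ u ∈ A, ∀ v ∈ A, ‖(f u - f v) - P (f u - f v)‖ ≤ δ * ‖u - v‖)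
    (α d : ℝ) (hα : 0 < α) (hd : 0 < d)
    (hcond : (m : ℝ) * (2 + 4 / α) ^ m * (α * L + 2 * δ) ^ d < 1) :
    μH[d] A = 0 ∧ dimH A ≤ ENNReal.ofReal d := by
  have : FiniteDimensional ℝ (LinearMap.range (P : X →ₗ[ℝ] X)) :=
    Module.finite_of_finrank_pos (hrank ▸ hm)
  subst hrank
  exact stmt_8_general hAc.isBounded hfA.ge P hL hδ hPf hQf hα hd.le
    ((pow_mul_rpow_le_mul_pow_mul_rpow hm hL hδ hα hd.le).trans_lt hcond)
end
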